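/- arXiv:1506.09025 — 2 statements merged into one kernel-verified Lean document; each statement's English description precedes it below -/
import Mathlib

section
/- Let g be a Lie algebra over a field F of characteristic p > 0, let φ : g × g → F be a 2-cocycle with trivial coefficients, and let h, z ∈ g be elements such that [z, x] = (ad h)ᵖ(x) for all x ∈ g (so z plays the role of the p-th power h^[p] of h in a restricted Lie algebra). Then the F-linear functional ψ : g → F defined by ψ(x) = φ(x, z) − φ((ad h)^{p−1}(x), h) vanishes on all brackets: ψ([x, y]) = 0 for all x, y ∈ g. (This is the statement that the Hochschild map Δ_φ(h)(x) = φ(x, h^[p]) − φ([x, h, …, h], h), with h repeated p − 1 times, defines a class in H¹(g, F).) -/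
section BilinearLeibniz

variable {R L : Type*} [CommRing R] [LieRing L] [LieAlgebra R L]

/-- Precomposition of a bilinear form with an endomorphism in the first variable. -/
def precompLeft (D : Module.End R L) : Module.End R (L →ₗ[R] L →ₗ[R] R) :=
  LinearMap.lcomp R (L →ₗ[R] R) D

/-- Precomposition of a bilinear form with an endomorphism in the second variable. -/
def precompRight (D : Module.End R L) : Module.End R (L →ₗ[R] L →ₗ[R] R) :=
  LinearMap.compRight R (LinearMap.lcomp R R D)

@[simp]
theorem precompLeft_apply (D : Module.End R L) (φ : L →ₗ[R] L →ₗ[R] R) (x y : L) :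
    precompLeft D φ x y = φ (D x) y := rfl

@[simp]
theorem precompRight_apply (D : Module.End R L) (φ : L →ₗ[R] L →ₗ[R] R) (x y : L) :
    precompRight D φ x y = φ x (D y) := rfl

theorem precompLeft_pow_apply (D : Module.End R L) (n : ℕ) (φ : L →ₗ[R] L →ₗ[R] R) (x y : L) :
    (precompLeft D ^ n) φ x y = φ ((D ^ n) x) y := by
  induction n generalizing x with
  | zero => rfl
  | succ n ih => rw [pow_succ', Module.End.mul_apply, precompLeft_apply, ih, pow_succ]; rfl

theorem precompRight_pow_apply (D : Module.End R L) (n : ℕ) (φ : L →ₗ[R] L →ₗ[R] R) (x y : L) :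
    (precompRight D ^ n) φ x y = φ x ((D ^ n) y) := by
  induction n generalizing y with
  | zero => rfl
  | succ n ih => rw [pow_succ', Module.End.mul_apply, precompRight_apply, ih, pow_succ]; rfl

theorem commute_precompLeft_precompRight (D : Module.End R L) :
    Commute (precompLeft D) (precompRight D) := rfl

/-- In characteristic `p`, the `p`-th power of the Leibniz operator on bilinear forms has no
mixed terms. -/
theorem precompLeft_add_precompRight_pow_char_apply {p : ℕ} [CharP R p] (hp : p.Prime)
    (D : Module.End R L) (φ : L →ₗ[R] L →ₗ[R] R) (x y : L) :
    ((precompLeft D + precompRight D) ^ p) φ x y = φ ((D ^ p) x) y + φ x ((D ^ p) y) := by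
  obtain ⟨r, hr⟩ := (commute_precompLeft_precompRight D).exists_add_pow_prime_eq hp
  rw [hr, mul_assoc, mul_assoc, ← nsmul_eq_mul]
  simp [precompLeft_pow_apply, precompRight_pow_apply]

theorem cocycle_lie_left {φ : L →ₗ[R] L →ₗ[R] R} (halt : φ.IsAlt)
    (hcoc : ∀ x y w : L, φ ⁅x, y⁆ w + φ ⁅y, w⁆ x + φ ⁅w, x⁆ y = 0) (x y w : L) :
    φ ⁅x, y⁆ w = -(φ ⁅w, x⁆ y + φ x ⁅w, y⁆) := by
  have hc := hcoc x y w
  rw [← lie_skew y w, map_neg, LinearMap.neg_apply, halt.neg] at hc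
  linear_combination hc

theorem cocycle_ad_pow_lie {φ : L →ₗ[R] L →ₗ[R] R} (halt : φ.IsAlt)
    (hcoc : ∀ x y w : L, φ ⁅x, y⁆ w + φ ⁅y, w⁆ x + φ ⁅w, x⁆ y = 0) (h : L) (n : ℕ) (x y : L) :
    φ ((LieAlgebra.ad R L h ^ n) ⁅x, y⁆) h =
      -((precompLeft (LieAlgebra.ad R L h) + precompRight (LieAlgebra.ad R L h)) ^ (n + 1))
        φ x y := by
  induction n generalizing x y with
  | zero => simpa using cocycle_lie_left halt hcoc x y h
  | succ n ih =>
    rw [pow_succ, Module.End.mul_apply, LieAlgebra.ad_apply, leibniz_lie, map_add, map_add,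
      LinearMap.add_apply, ih, ih, pow_succ' _ (n + 1), Module.End.mul_apply]
    simp only [LinearMap.add_apply, precompLeft_apply, precompRight_apply,
      LieAlgebra.ad_apply]
    ring

end BilinearLeibniz

/-- Let `g` be a Lie algebra over a field `F` of characteristic `p > 0`, let `φ` be a
2-cocycle with trivial coefficients (an alternating bilinear form satisfying the
cocycle identity), and let `h z : g` satisfy `⁅z, x⁆ = (ad h)^p x` for all `x`
(so `z` plays the role of `h^[p]`). Then the linear functional
`ψ(x) = φ(x, z) − φ((ad h)^(p−1) x, h)` vanishes on all brackets. -/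
theorem hochschild_delta_cocycle_vanishes_on_brackets
    {F L : Type*} [Field F] [LieRing L] [LieAlgebra F L]
    (p : ℕ) [CharP F p] (hp : 0 < p)
    (φ : L →ₗ[F] L →ₗ[F] F)
    (halt : ∀ x : L, φ x x = 0)
    (hcoc : ∀ x y w : L, φ ⁅x, y⁆ w + φ ⁅y, w⁆ x + φ ⁅w, x⁆ y = 0)
    (h z : L)
    (hz : ∀ x : L, ⁅z, x⁆ = ((LieAlgebra.ad F L h) ^ p) x) :
    ∀ x y : L,
      φ ⁅x, y⁆ z - φ (((LieAlgebra.ad F L h) ^ (p - 1)) ⁅x, y⁆) h = 0 := by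

  intro x y
  have hprime : p.Prime := (CharP.char_is_prime_or_zero F p).resolve_right hp.ne'
  rw [cocycle_ad_pow_lie halt hcoc, Nat.sub_add_cancel hp,
    precompLeft_add_precompRight_pow_char_apply hprime,
    cocycle_lie_left halt hcoc, hz, hz]
  ring
end

section
/- Let g be a simple Lie algebra over a field F of characteristic p > 0, let φ : g × g → F be a 2-cocycle with trivial coefficients, and let h, z ∈ g be elements such that [z, x] = (ad h)ᵖ(x) for all x ∈ g (so z plays the role of the p-th power h^[p] of h in a restricted Lie algebra). Then φ(x, z) = φ((ad h)^{p−1}(x), h) for all x ∈ g; that is, φ(x, h^[p]) − φ([x, h, …, h], h) = 0 with h repeated p − 1 times. (This expresses that the Hochschild map Δ : H²(g, F) → Hom_fr(g, H¹(g, F)) is the zero map, since H¹(g, F) = 0 for simple g.) -/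
/-- Precomposition of functions of two variables with a map in the first variable. -/
def precompFst (F : Type*) {L : Type*} [Field F] (D : L → L) : Module.End F (L → L → F) where
  toFun f a b := f (D a) b
  map_add' _ _ := rfl
  map_smul' _ _ := rfl

/-- Precomposition of functions of two variables with a map in the second variable. -/
def precompSnd (F : Type*) {L : Type*} [Field F] (D : L → L) : Module.End F (L → L → F) where
  toFun f a b := f a (D b)
  map_add' _ _ := rfl
  map_smul' _ _ := rfl

theorem precompFst_pow_apply {F L : Type*} [Field F] (D : L → L) (n : ℕ)
    (f : L → L → F) (a b : L) : (precompFst F D ^ n) f a b = f (D^[n] a) b := by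
  induction n generalizing f with
  | zero => rfl
  | succ n ih =>
    rw [pow_succ, Module.End.mul_apply, ih, Function.iterate_succ_apply']
    rfl

theorem precompSnd_pow_apply {F L : Type*} [Field F] (D : L → L) (n : ℕ)
    (f : L → L → F) (a b : L) : (precompSnd F D ^ n) f a b = f a (D^[n] b) := by
  induction n generalizing f with
  | zero => rfl
  | succ n ih =>
    rw [pow_succ, Module.End.mul_apply, ih, Function.iterate_succ_apply']
    rfl

theorem commute_precompFst_precompSnd (F : Type*) {L : Type*} [Field F] (D : L → L) :
    Commute (precompFst F D) (precompSnd F D) := rfl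

/-- In characteristic `p`, the `p`-th power of `f ↦ f(D·, ·) + f(·, D·)` is
`f ↦ f(Dᵖ·, ·) + f(·, Dᵖ·)`. -/
theorem precompFst_add_precompSnd_pow_char {F L : Type*} [Field F] [Nonempty L]
    (p : ℕ) [CharP F p] [Fact p.Prime] (D : L → L) (f : L → L → F) (a b : L) :
    ((precompFst F D + precompSnd F D) ^ p) f a b = f (D^[p] a) b + f a (D^[p] b) := by
  have : CharP (Module.End F (L → L → F)) p :=
    charP_of_injective_algebraMap (algebraMap F (Module.End F (L → L → F))).injective p
  rw [add_pow_char_of_commute (p := p) (h := commute_precompFst_precompSnd F D),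
    LinearMap.add_apply, Pi.add_apply, Pi.add_apply, precompFst_pow_apply, precompSnd_pow_apply]

/-- Evaluating a functional on `(ad h)ⁿ ⁅a, b⁆` amounts to applying the Leibniz operator
`n` times to the function `(a, b) ↦ f ⁅a, b⁆`. -/
theorem apply_ad_pow_lie {F L : Type*} [Field F] [LieRing L] [LieAlgebra F L]
    (f : L →ₗ[F] F) (h : L) (n : ℕ) (a b : L) :
    f ((LieAlgebra.ad F L h ^ n) ⁅a, b⁆) =
      ((precompFst F (LieAlgebra.ad F L h) + precompSnd F (LieAlgebra.ad F L h)) ^ n)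
        (fun x y => f ⁅x, y⁆) a b := by
  induction n generalizing a b with
  | zero => rfl
  | succ n ih =>
    rw [pow_succ, Module.End.mul_apply, LieAlgebra.ad_apply, leibniz_lie, map_add, map_add,
      ih, ih, pow_succ', Module.End.mul_apply]
    rfl

/-- A simple Lie algebra is spanned by its brackets. -/
theorem LieAlgebra.IsSimple.span_lie_eq_top (F L : Type*) [Field F] [LieRing L] [LieAlgebra F L]
    [LieAlgebra.IsSimple F L] :
    Submodule.span F {x : L | ∃ a b : L, ⁅a, b⁆ = x} = ⊤ := by
  have key : ⁅(⊤ : LieIdeal F L), (⊤ : LieIdeal F L)⁆ = ⊤ := by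
    refine (LieAlgebra.IsSimple.eq_bot_or_eq_top _).resolve_left fun hbot => ?_
    refine LieAlgebra.IsSimple.non_abelian F (L := L) ⟨fun a b => ?_⟩
    have hab := LieSubmodule.lie_mem_lie (LieSubmodule.mem_top (R := F) (L := L) a)
      (LieSubmodule.mem_top (R := F) (L := L) b)
    rwa [hbot, LieSubmodule.mem_bot] at hab
  have hspan := LieSubmodule.lieIdeal_oper_eq_linear_span' (N := (⊤ : LieIdeal F L))
    (I := (⊤ : LieIdeal F L))
  rw [key] at hspan
  simpa using hspan.symm

/-- Let `g` be a simple Lie algebra over a field `F` of characteristic `p > 0`, let `φ`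
be a 2-cocycle with trivial coefficients (an alternating bilinear form satisfying the
cocycle identity), and let `h z : g` satisfy `⁅z, x⁆ = (ad h)^p x` for all `x`
(so `z` plays the role of `h^[p]`). Then `φ(x, z) = φ((ad h)^(p−1) x, h)` for all
`x`; i.e. the Hochschild map `Δ` is zero since `H¹(g, F) = 0`. -/
theorem hochschild_delta_is_zero_of_simple
    {F L : Type*} [Field F] [LieRing L] [LieAlgebra F L]
    [LieAlgebra.IsSimple F L]
    (p : ℕ) [CharP F p] (hp : 0 < p)
    (φ : L →ₗ[F] L →ₗ[F] F)
    (halt : ∀ x : L, φ x x = 0)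
    (hcoc : ∀ x y w : L, φ ⁅x, y⁆ w + φ ⁅y, w⁆ x + φ ⁅w, x⁆ y = 0)
    (h z : L)
    (hz : ∀ x : L, ⁅z, x⁆ = ((LieAlgebra.ad F L h) ^ p) x) :
    ∀ x : L, φ x z = φ (((LieAlgebra.ad F L h) ^ (p - 1)) x) h := by
  intro x
  have : NeZero p := ⟨hp.ne'⟩
  have : Fact p.Prime := CharP.char_is_prime_of_pos F p
  have hanti (u v : L) : φ u v = -φ v u := by
    have huv := halt (u + v)
    simp only [map_add, LinearMap.add_apply, halt, zero_add, add_zero] at huv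
    exact eq_neg_of_add_eq_zero_right huv
  have hlie (u v w : L) : φ ⁅u, v⁆ w = -(φ ⁅w, u⁆ v + φ u ⁅w, v⁆) := by
    have huv := hcoc u v w
    rw [← lie_skew v w, map_neg, LinearMap.neg_apply, hanti ⁅w, v⁆ u] at huv
    linear_combination huv
  have hbase : (fun u v => φ ⁅u, v⁆ h) =
      -(precompFst F (LieAlgebra.ad F L h) + precompSnd F (LieAlgebra.ad F L h))
        (fun u v => φ u v) := by
    funext u v
    exact hlie u v h
  have hx : x ∈ Submodule.span F {x : L | ∃ a b : L, ⁅a, b⁆ = x} :=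
    LieAlgebra.IsSimple.span_lie_eq_top F L ▸ Submodule.mem_top
  induction hx using Submodule.span_induction with
  | zero => simp
  | add u v _ _ hu hv => simp only [map_add, LinearMap.add_apply, hu, hv]
  | smul c u _ hu => simp only [map_smul, LinearMap.smul_apply, hu]
  | mem _ hmem =>
    obtain ⟨a, b, rfl⟩ := hmem
    have hpow := apply_ad_pow_lie (φ.flip h) h (p - 1) a b
    simp only [LinearMap.flip_apply] at hpow
    rw [hpow, hbase, map_neg, ← Module.End.mul_apply, ← pow_succ, Nat.sub_add_cancel hp,
      Pi.neg_apply, Pi.neg_apply, precompFst_add_precompSnd_pow_char, hlie, hz, hz,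
      Module.End.pow_apply, Module.End.pow_apply]
end
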